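/- Let Δ ≥ 4 be an even integer and let t be an integer with 1 ≤ t ≤ Δ−2. Let c be a proper edge-coloring of the multigraph H^Δ_t. Define a simple graph Γ whose vertices are the palettes P_c(v_j) for j ∈ {0,…,Δ−1}, with two palettes P ≠ Q adjacent if and only if there exists an even index j with {P, Q} = {P_c(v_j), P_c(v_{j+1})}. Then Γ is acyclic, i.e. Γ is a forest. -/

import Mathlib

/-- A proper edge-coloring of a multigraph given by an edge-index type `E`,
a vertex type `V` and an endpoints map `ends : E → Sym2 V`: distinct edges
sharing an endpoint receive distinct colors. -/
def MG.Proper {E V C : Type*} (ends : E → Sym2 V) (c : E → C) : Prop :=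
  ∀ e₁ e₂ : E, e₁ ≠ e₂ → (∃ x : V, x ∈ ends e₁ ∧ x ∈ ends e₂) → c e₁ ≠ c e₂

/-- The palette of a vertex: the set of colors of the edges incident with it. -/
def MG.palette {E V C : Type*} (ends : E → Sym2 V) (c : E → C) (x : V) : Set C :=
  {γ : C | ∃ e : E, x ∈ ends e ∧ c e = γ}

/-- The multigraph `H^Δ_t`: vertices are `none` (the center `u`) and `some j`
(the vertex `v_j`), edges are the spokes `e_j = u v_j` together with `t`
parallel edges between `v_{2i}` and `v_{2i+1}`. -/
def Hends (Δ t : ℕ) : (Fin Δ ⊕ Fin (Δ / 2) × Fin t) → Sym2 (Option (Fin Δ))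
  | Sum.inl j => s(none, some j)
  | Sum.inr (i, _) =>
      s(some ⟨2 * i.1, by have := i.2; omega⟩, some ⟨2 * i.1 + 1, by have := i.2; omega⟩)

/-- The partner `j'` of an index `j`: `j+1` if `j` is even, `j-1` if `j` is odd. -/
def partner {Δ : ℕ} (hΔ : 2 ∣ Δ) (j : Fin Δ) : Fin Δ :=
  ⟨if j.1 % 2 = 0 then j.1 + 1 else j.1 - 1, by
    obtain ⟨k, hk⟩ := hΔ; have := j.2; split <;> omega⟩

/-!
The palettes of `v_j` and its partner `v_{j'}` share the colors of the parallel edges between them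
and otherwise consist of their own spoke colors. All spoke colors are distinct, so among the pairs
`{v_k, v_{k'}}` only the one containing `v_j` has palettes that disagree on the color of the spoke
at `v_j`. Hence the palettes containing this color form a side of a cut crossed by a single edge of
`Γ`: every edge of `Γ` is a bridge.
-/

section SeparatingSets

variable {V : Type*}

theorem isBridge_of_unique_boundary_edge {G : SimpleGraph V} {S : Set V} {u v : V}
    (hu : u ∈ S) (hv : v ∉ S) (h : ∀ a ∈ S, ∀ b ∉ S, G.Adj a b → s(a, b) = s(u, v)) :
    G.IsBridge s(u, v) := by
  rw [SimpleGraph.isBridge_iff]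
  rintro ⟨p⟩
  obtain ⟨d, -, hd₁, hd₂⟩ := p.exists_boundary_dart S hu hv
  have hd := d.adj
  rw [SimpleGraph.deleteEdges_adj] at hd
  exact hd.2 (h _ hd₁ _ hd₂ hd.1)

theorem isAcyclic_fromRel_of_separating {r : V → V → Prop}
    (h : ∀ u v, r u v → ∃ S : Set V, u ∈ S ∧ v ∉ S ∧
      ∀ a b, r a b → (a = u ∧ b = v) ∨ (a ∈ S ↔ b ∈ S)) :
    (SimpleGraph.fromRel r).IsAcyclic := by
  have isBridge_of_rel {u v : V} (huv : r u v) : (SimpleGraph.fromRel r).IsBridge s(u, v) := by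
    obtain ⟨S, hu, hv, hS⟩ := h u v huv
    refine isBridge_of_unique_boundary_edge hu hv fun a ha b hb hab => ?_
    obtain ⟨-, hab | hba⟩ := hab
    · obtain ⟨rfl, rfl⟩ | hiff := hS a b hab
      · rfl
      · exact absurd (hiff.1 ha) hb
    · obtain ⟨rfl, rfl⟩ | hiff := hS b a hba
      · exact Sym2.eq_swap
      · exact absurd (hiff.2 ha) hb
  rw [SimpleGraph.isAcyclic_iff_forall_adj_isBridge]
  rintro u v ⟨-, huv | hvu⟩
  · exact isBridge_of_rel huv
  · exact Sym2.eq_swap ▸ isBridge_of_rel hvu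

end SeparatingSets

theorem MG.Proper.eq_of_color_eq {E V C : Type*} {ends : E → Sym2 V} {c : E → C}
    (hc : MG.Proper ends c) {e₁ e₂ : E} {x : V} (h₁ : x ∈ ends e₁) (h₂ : x ∈ ends e₂)
    (h : c e₁ = c e₂) : e₁ = e₂ :=
  by_contra fun hne => hc e₁ e₂ hne ⟨x, h₁, h₂⟩ h

section Partner

variable {Δ : ℕ} (hev : 2 ∣ Δ)

theorem partner_ne (j : Fin Δ) : partner hev j ≠ j := by
  simp only [partner, ne_eq, Fin.ext_iff]
  split <;> omega

theorem partner_val_mod_two {j : Fin Δ} (hj : j.1 % 2 = 0) : (partner hev j).1 % 2 = 1 := by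
  simp only [partner, hj, if_true]
  omega

/-- The index `i` such that `v_j` is one of the two vertices `v_{2i}`, `v_{2i+1}` joined by the
`i`-th bundle of parallel edges of `H^Δ_t`. -/
def bundleIndex (j : Fin Δ) : Fin (Δ / 2) :=
  ⟨j.1 / 2, by omega⟩

theorem bundleIndex_partner (j : Fin Δ) : bundleIndex hev (partner hev j) = bundleIndex hev j := by
  simp only [bundleIndex, partner, Fin.ext_iff]
  split <;> omega

end Partner

section Palettes

variable {Δ t : ℕ}

theorem some_mem_Hends_inl {j k : Fin Δ} : some k ∈ Hends Δ t (.inl j) ↔ k = j := by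
  simp [Hends]

theorem some_mem_Hends_inr (hev : 2 ∣ Δ) {j : Fin Δ} {i : Fin (Δ / 2)} {s : Fin t} :
    some j ∈ Hends Δ t (.inr (i, s)) ↔ bundleIndex hev j = i := by
  simp only [Hends, Sym2.mem_iff, Option.some.injEq, Fin.ext_iff, bundleIndex]
  omega

variable {C : Type*} {c : Fin Δ ⊕ Fin (Δ / 2) × Fin t → C}

theorem mem_palette_some (hev : 2 ∣ Δ) {j : Fin Δ} {γ : C} :
    γ ∈ MG.palette (Hends Δ t) c (some j) ↔
      c (.inl j) = γ ∨ ∃ s : Fin t, c (.inr (bundleIndex hev j, s)) = γ := by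
  simp [MG.palette, some_mem_Hends_inl, some_mem_Hends_inr hev]

theorem spokeColor_mem_palette (j : Fin Δ) :
    c (.inl j) ∈ MG.palette (Hends Δ t) c (some j) :=
  ⟨.inl j, some_mem_Hends_inl.2 rfl, rfl⟩

theorem spokeColor_injective (hc : MG.Proper (Hends Δ t) c) :
    Function.Injective fun j : Fin Δ => c (.inl j) := fun _ _ h =>
  Sum.inl.inj (hc.eq_of_color_eq (Sym2.mem_mk_left none _) (Sym2.mem_mk_left none _) h)

theorem bundleColor_ne_spokeColor (hev : 2 ∣ Δ) (hc : MG.Proper (Hends Δ t) c) (j : Fin Δ)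
    (s : Fin t) : c (.inr (bundleIndex hev j, s)) ≠ c (.inl j) :=
  hc _ _ Sum.inr_ne_inl ⟨some j, (some_mem_Hends_inr hev).2 rfl, some_mem_Hends_inl.2 rfl⟩

theorem spokeColor_notMem_palette_partner (hev : 2 ∣ Δ) (hc : MG.Proper (Hends Δ t) c)
    (j : Fin Δ) : c (.inl j) ∉ MG.palette (Hends Δ t) c (some (partner hev j)) := by
  rw [mem_palette_some hev, bundleIndex_partner]
  rintro (hspoke | ⟨s, hbundle⟩)
  · exact partner_ne hev j (spokeColor_injective hc hspoke)
  · exact bundleColor_ne_spokeColor hev hc j s hbundle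

theorem mem_palette_partner_iff (hev : 2 ∣ Δ) {j : Fin Δ} {γ : C}
    (hj : c (.inl j) ≠ γ) (hj' : c (.inl (partner hev j)) ≠ γ) :
    γ ∈ MG.palette (Hends Δ t) c (some j) ↔
      γ ∈ MG.palette (Hends Δ t) c (some (partner hev j)) := by
  simp only [mem_palette_some hev, bundleIndex_partner, hj, hj']

theorem spokeColor_mem_palette_iff_partner (hev : 2 ∣ Δ) (hc : MG.Proper (Hends Δ t) c)
    {j k : Fin Δ} (hj : j.1 % 2 = 0) (hk : k.1 % 2 = 0) (hkj : k ≠ j) :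
    c (.inl j) ∈ MG.palette (Hends Δ t) c (some k) ↔
      c (.inl j) ∈ MG.palette (Hends Δ t) c (some (partner hev k)) := by
  have hpartner : partner hev k ≠ j := by
    rintro rfl
    have := partner_val_mod_two hev hk
    omega
  exact mem_palette_partner_iff hev ((spokeColor_injective hc).ne hkj)
    ((spokeColor_injective hc).ne hpartner)

end Palettes

theorem palette_graph_isAcyclic_general {Δ t : ℕ} (hev : 2 ∣ Δ) {C : Type*}
    (c : (Fin Δ ⊕ Fin (Δ / 2) × Fin t) → C) (hc : MG.Proper (Hends Δ t) c) :
    (SimpleGraph.fromRel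
      (fun P Q : {P : Set C // ∃ j : Fin Δ, MG.palette (Hends Δ t) c (some j) = P} =>
        ∃ j : Fin Δ, j.1 % 2 = 0 ∧
          P.1 = MG.palette (Hends Δ t) c (some j) ∧
          Q.1 = MG.palette (Hends Δ t) c (some (partner hev j)))).IsAcyclic := by
  refine isAcyclic_fromRel_of_separating ?_
  rintro ⟨_, _⟩ ⟨_, _⟩ ⟨j, hj, rfl, rfl⟩
  refine ⟨{R | c (.inl j) ∈ R.1}, spokeColor_mem_palette j,
    spokeColor_notMem_palette_partner hev hc j, ?_⟩
  rintro ⟨_, _⟩ ⟨_, _⟩ ⟨k, hk, rfl, rfl⟩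
  obtain rfl | hkj := eq_or_ne k j
  · exact .inl ⟨rfl, rfl⟩
  · exact .inr (spokeColor_mem_palette_iff_partner hev hc hj hk hkj)

/-- the simple graph `Γ` on the palettes of the non-central
vertices of `H^Δ_t`, where two distinct palettes `P ≠ Q` are adjacent iff
`{P, Q} = {P_c(v_j), P_c(v_{j+1})}` for some even index `j`, is a forest. -/
theorem palette_graph_isAcyclic {Δ t : ℕ} (hΔ : 4 ≤ Δ) (hev : 2 ∣ Δ)
    (ht1 : 1 ≤ t) (ht2 : t ≤ Δ - 2) {C : Type*}
    (c : (Fin Δ ⊕ Fin (Δ / 2) × Fin t) → C) (hc : MG.Proper (Hends Δ t) c) :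
    (SimpleGraph.fromRel
      (fun P Q : {P : Set C // ∃ j : Fin Δ, MG.palette (Hends Δ t) c (some j) = P} =>
        ∃ j : Fin Δ, j.1 % 2 = 0 ∧
          P.1 = MG.palette (Hends Δ t) c (some j) ∧
          Q.1 = MG.palette (Hends Δ t) c (some (partner hev j)))).IsAcyclic :=
  palette_graph_isAcyclic_general hev c hc
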